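/- There exists a constant C > 0 such that for all Φ₁, Φ₂ ∈ Z one has ‖Φ₂ * Φ₂ − Φ₁ * Φ₁‖_Z ≤ C·(‖Φ₂‖_Z + ‖Φ₁‖_Z)·‖Φ₂ − Φ₁‖_Z; i.e. the quadratic map Φ ↦ Φ * Φ is locally Lipschitz on Z. -/

import Mathlib

/-!
On `[0, ∞)` the norm of `Z` dominates, up to a constant, the smallest multiple of the single weight
`ω(z) = e^(-β₁ z) (1 + z)^(-β₂)` that bounds the function (`abs_le_weight`), and conversely a
bound by a multiple of `ω` controls the norm (`normZ_le_of_weight`). The convolution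
`ω * ω` is again at most a multiple of `ω`: the exponentials multiply to `e^(-β₁ z)`, and since one of `y`,
`z - y` is at least `z / 2`, the product `(1 + z - y)^(-β₂) (1 + y)^(-β₂)` is at most
`2^β₂ (1 + z)^(-β₂)` times the sum of its factors (`weight_mul_le`); these are
integrable on `[0, ∞)` because `β₂ > 1` (`integral_weight_le`). The Lipschitz estimate then follows
from the splitting `Φ₂ * Φ₂ - Φ₁ * Φ₁ = (Φ₂ - Φ₁) * Φ₂ + Φ₁ * (Φ₂ - Φ₁)`, used under the integral.
-/

open MeasureTheory Set Filter

/-- λ_LSW := 3 (1/2)^(2/3) -/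
noncomputable def lamLSW : ℝ := 3 * (1/2 : ℝ) ^ ((2:ℝ)/3)

/-- a_δ(z) := 1/(1 + z − (λ_LSW − δ) z^(1/3)) -/
noncomputable def aF (δ z : ℝ) : ℝ := 1 / (1 + z - (lamLSW - δ) * z ^ ((1:ℝ)/3))

/-- b_δ(z) := 2 − (1/3)(λ_LSW − δ) z^(−2/3) -/
noncomputable def bF (δ z : ℝ) : ℝ := 2 - (1/3) * (lamLSW - δ) * z ^ (-(2:ℝ)/3)

/-- ‖Φ‖_sup := sup_{0≤z≤1} |Φ(z)| -/
noncomputable def normSup (Φ : ℝ → ℝ) : ℝ := sSup ((fun z => |Φ z|) '' Icc (0:ℝ) 1)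

/-- ‖Φ‖_tail := sup_{z≥1} |Φ(z)| e^{β₁ z} z^{β₂} -/
noncomputable def normTail (β₁ β₂ : ℝ) (Φ : ℝ → ℝ) : ℝ :=
  sSup ((fun z => |Φ z| * Real.exp (β₁ * z) * z ^ β₂) '' Ici (1:ℝ))

/-- ‖Φ‖_Z := ‖Φ‖_sup + ‖Φ‖_tail -/
noncomputable def normZ (β₁ β₂ : ℝ) (Φ : ℝ → ℝ) : ℝ := normSup Φ + normTail β₁ β₂ Φ

/-- membership in the space Z: measurable with finite norm -/
def memZ (β₁ β₂ : ℝ) (Φ : ℝ → ℝ) : Prop :=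
  Measurable Φ ∧ BddAbove ((fun z => |Φ z|) '' Icc (0:ℝ) 1) ∧
    BddAbove ((fun z => |Φ z| * Real.exp (β₁ * z) * z ^ β₂) '' Ici (1:ℝ))

/-- (Φ₁ * Φ₂)(z) := (1/2) ∫₀^z Φ₁(z−y) Φ₂(y) dy -/
noncomputable def conv (Φ₁ Φ₂ : ℝ → ℝ) (z : ℝ) : ℝ :=
  (1/2) * ∫ y in (0:ℝ)..z, Φ₁ (z - y) * Φ₂ y

/-- unnormalized solution of the homogeneous ODE -/
noncomputable def psi0 (δ ε εt z : ℝ) : ℝ :=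
  Real.exp (-∫ y in (0:ℝ)..z, aF δ y * (bF δ y - εt * y - ε))

/-- ψ(z; ε, ε̃, δ), normalized so that ∫₀¹ z ψ dz = 1 -/
noncomputable def psi (δ ε εt z : ℝ) : ℝ :=
  psi0 δ ε εt z / ∫ t in (0:ℝ)..1, t * psi0 δ ε εt t

/-- the smooth LSW self-similar profile -/
noncomputable def PhiLSW (z : ℝ) : ℝ :=
  if z ≤ 1/2 then
    Real.exp (-∫ y in (0:ℝ)..z, aF 0 y * bF 0 y) /
      ∫ t in (0:ℝ)..(1/2 : ℝ), t * Real.exp (-∫ y in (0:ℝ)..t, aF 0 y * bF 0 y)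
  else 0

/-- ρ_δ(ξ) := ξ a_δ(ξ) exp(−∫_ξ^1 a_δ b_δ) -/
noncomputable def rhoF (δ ξ : ℝ) : ℝ :=
  ξ * aF δ ξ * Real.exp (-∫ y in ξ..(1:ℝ), aF δ y * bF δ y)

/-- R_δ[h] := ∫₀¹ ρ_δ(ξ) h(ξ) dξ -/
noncomputable def Rdel (δ : ℝ) (h : ℝ → ℝ) : ℝ := ∫ ξ in (0:ℝ)..1, rhoF δ ξ * h ξ

/-- R₀[h] := ∫_{1/2}^1 ξ a₀(ξ) h(ξ) exp(−∫_ξ^1 a₀ b₀) dξ -/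
noncomputable def Rzero (h : ℝ → ℝ) : ℝ :=
  ∫ ξ in (1/2 : ℝ)..1, ξ * aF 0 ξ * h ξ * Real.exp (-∫ y in ξ..(1:ℝ), aF 0 y * bF 0 y)

/-- γ₁(z) = z, γ₂(z) = 1 -/
noncomputable def gamF (i : ℕ) (z : ℝ) : ℝ := if i = 1 then z else 1

/-- Γ_i(ξ; ε, ε̃, δ) -/
noncomputable def Gam (i : ℕ) (δ ε εt ξ : ℝ) : ℝ :=
  ∫ z in (0:ℝ)..ξ, gamF i z * Real.exp (∫ y in z..ξ, aF δ y * (bF δ y - εt * y - ε))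

/-- Γ̂_i(ξ; δ) := Γ_i(ξ; 0, 0, δ) -/
noncomputable def GamHat (i : ℕ) (δ ξ : ℝ) : ℝ := Gam i δ 0 0 ξ

/-- K_i^δ := Γ̂_i(1; δ) -/
noncomputable def Kc (i : ℕ) (δ : ℝ) : ℝ := GamHat i δ 1

/-- Ĝ_i[h; δ] := ∫₀¹ ξ a_δ(ξ) h(ξ) Γ̂_i(ξ; δ) dξ -/
noncomputable def Ghat (i : ℕ) (δ : ℝ) (h : ℝ → ℝ) : ℝ :=
  ∫ ξ in (0:ℝ)..1, ξ * aF δ ξ * h ξ * GamHat i δ ξ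

/-- G_i[h; ε, ε̃, δ] := ∫₀^∞ ξ a_δ(ξ) h(ξ) Γ_i(ξ; ε, ε̃, δ) dξ -/
noncomputable def Gfull (i : ℕ) (δ ε εt : ℝ) (h : ℝ → ℝ) : ℝ :=
  ∫ ξ in Ioi (0:ℝ), ξ * aF δ ξ * h ξ * Gam i δ ε εt ξ

lemma memZ.sub {β₁ β₂ : ℝ} {f g : ℝ → ℝ} (hf : memZ β₁ β₂ f) (hg : memZ β₁ β₂ g) :
    memZ β₁ β₂ (fun z => f z - g z) := by
  obtain ⟨mf, ⟨a, ha⟩, ⟨b, hb⟩⟩ := hf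
  obtain ⟨mg, ⟨a', ha'⟩, ⟨b', hb'⟩⟩ := hg
  refine ⟨mf.sub mg, ⟨a + a', ?_⟩, ⟨b + b', ?_⟩⟩
  · rintro _ ⟨z, hz, rfl⟩
    have h1 := ha ⟨z, hz, rfl⟩
    have h2 := ha' ⟨z, hz, rfl⟩
    have h3 := abs_sub (f z) (g z)
    simp only at h1 h2 ⊢
    linarith
  · rintro _ ⟨z, hz, rfl⟩
    have h1 := hb ⟨z, hz, rfl⟩
    have h2 := hb' ⟨z, hz, rfl⟩
    have h3 := abs_sub (f z) (g z)
    have hz0 : (0 : ℝ) ≤ z := le_trans zero_le_one hz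
    have h4 : 0 ≤ Real.exp (β₁ * z) * z ^ β₂ := by positivity
    simp only at h1 h2 ⊢
    have h5 := mul_le_mul_of_nonneg_right h3 h4
    linarith

lemma normSup_nonneg (f : ℝ → ℝ) : 0 ≤ normSup f :=
  Real.sSup_nonneg (by rintro _ ⟨z, _, rfl⟩; exact abs_nonneg _)

lemma normTail_nonneg (β₁ β₂ : ℝ) (f : ℝ → ℝ) : 0 ≤ normTail β₁ β₂ f :=
  Real.sSup_nonneg (by
    rintro _ ⟨z, hz, rfl⟩
    have hz0 : (0 : ℝ) ≤ z := le_trans zero_le_one hz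
    positivity)

lemma normZ_nonneg (β₁ β₂ : ℝ) (f : ℝ → ℝ) : 0 ≤ normZ β₁ β₂ f :=
  add_nonneg (normSup_nonneg f) (normTail_nonneg β₁ β₂ f)

/-- The norm of `Z` bounds a function by the weight `e^(-β₁ z) (1 + z)^(-β₂)` on all of `[0, ∞)`.
The constant absorbs the smallest value of the weight on `[0, 1]` and `1 + z ≤ 2 z` on `[1, ∞)`. -/
lemma abs_le_weight {β₁ β₂ : ℝ} (hβ₁ : 0 < β₁) (hβ₂ : 1 < β₂) {f : ℝ → ℝ}
    (hf : memZ β₁ β₂ f) {z : ℝ} (hz : 0 ≤ z) :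
    |f z| ≤ normZ β₁ β₂ f * (Real.exp β₁ * 2 ^ β₂) *
      (Real.exp (-(β₁ * z)) * (1 + z) ^ (-β₂)) := by
  have hN := normZ_nonneg β₁ β₂ f
  rw [Real.exp_neg, Real.rpow_neg (by linarith), ← mul_inv, ← div_eq_mul_inv,
    le_div_iff₀ (by positivity)]
  rcases le_total z 1 with h1 | h1
  · have hs : |f z| ≤ normSup f := le_csSup hf.2.1 ⟨z, ⟨hz, h1⟩, rfl⟩
    have hs' : |f z| ≤ normZ β₁ β₂ f := hs.trans (by
      have := normTail_nonneg β₁ β₂ f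
      unfold normZ; linarith)
    have e1 : Real.exp (β₁ * z) ≤ Real.exp β₁ := Real.exp_le_exp.2 (by nlinarith)
    have e2 : (1 + z) ^ β₂ ≤ 2 ^ β₂ :=
      Real.rpow_le_rpow (by linarith) (by linarith) (by linarith)
    gcongr
  · have ht : |f z| * Real.exp (β₁ * z) * z ^ β₂ ≤ normTail β₁ β₂ f :=
      le_csSup hf.2.2 ⟨z, h1, rfl⟩
    have ht' : |f z| * Real.exp (β₁ * z) * z ^ β₂ ≤ normZ β₁ β₂ f := ht.trans (by
      have := normSup_nonneg f
      unfold normZ; linarith)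
    have e1 : (1 + z) ^ β₂ ≤ 2 ^ β₂ * z ^ β₂ := by
      rw [← Real.mul_rpow (by norm_num) hz]
      exact Real.rpow_le_rpow (by linarith) (by linarith) (by linarith)
    have e2 : 1 ≤ Real.exp β₁ := Real.one_le_exp hβ₁.le
    calc |f z| * (Real.exp (β₁ * z) * (1 + z) ^ β₂)
        ≤ |f z| * (Real.exp (β₁ * z) * (2 ^ β₂ * z ^ β₂)) := by gcongr
      _ = (|f z| * Real.exp (β₁ * z) * z ^ β₂) * (1 * 2 ^ β₂) := by ring
      _ ≤ normZ β₁ β₂ f * (Real.exp β₁ * 2 ^ β₂) := by gcongr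

lemma normZ_le_of_weight {β₁ β₂ : ℝ} (hβ₁ : 0 < β₁) (hβ₂ : 1 < β₂) {f : ℝ → ℝ} {A : ℝ}
    (hA : 0 ≤ A)
    (hf : ∀ z, 0 ≤ z → |f z| ≤ A * (Real.exp (-(β₁ * z)) * (1 + z) ^ (-β₂))) :
    normZ β₁ β₂ f ≤ 2 * A := by
  have h1 : normSup f ≤ A := by
    refine Real.sSup_le ?_ hA
    rintro _ ⟨z, hz, rfl⟩
    refine (hf z hz.1).trans (mul_le_of_le_one_right hA ?_)
    refine mul_le_one₀ (Real.exp_le_one_iff.2 ?_) (Real.rpow_nonneg (by linarith [hz.1]) _)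
      (Real.rpow_le_one_of_one_le_of_nonpos (by linarith [hz.1]) (by linarith))
    nlinarith [hz.1]
  have h2 : normTail β₁ β₂ f ≤ A := by
    refine Real.sSup_le ?_ hA
    rintro _ ⟨z, hz, rfl⟩
    have hz0 : (0 : ℝ) ≤ z := le_trans zero_le_one hz
    have h := hf z hz0
    rw [Real.exp_neg, Real.rpow_neg (by linarith), ← mul_inv, ← div_eq_mul_inv,
      le_div_iff₀ (by positivity)] at h
    have e1 : z ^ β₂ ≤ (1 + z) ^ β₂ := Real.rpow_le_rpow hz0 (by linarith) (by linarith)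
    calc |f z| * Real.exp (β₁ * z) * z ^ β₂
        ≤ |f z| * Real.exp (β₁ * z) * (1 + z) ^ β₂ := by gcongr
      _ = |f z| * (Real.exp (β₁ * z) * (1 + z) ^ β₂) := by ring
      _ ≤ A := h
  unfold normZ
  linarith

/-- The larger of `a`, `b` is at least half of `a + b`, so its factor is at most
`2^β (1 + (a + b))^(-β)`; the other factor is kept. -/
lemma weight_mul_le {β a b : ℝ} (hβ : 0 < β) (ha : 0 ≤ a) (hb : 0 ≤ b) :
    (1 + a) ^ (-β) * (1 + b) ^ (-β) ≤
      2 ^ β * (1 + (a + b)) ^ (-β) * ((1 + a) ^ (-β) + (1 + b) ^ (-β)) := by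
  have key : ∀ c : ℝ, 0 ≤ c → a + b ≤ 2 * c →
      (1 + c) ^ (-β) ≤ 2 ^ β * (1 + (a + b)) ^ (-β) := by
    intro c hc h
    have : (1 + c) ^ (-β) ≤ (2⁻¹ * (1 + (a + b))) ^ (-β) :=
      Real.rpow_le_rpow_of_nonpos (by positivity) (by linarith) (by linarith)
    rwa [Real.mul_rpow (by norm_num) (by positivity), Real.inv_rpow (by norm_num),
      Real.rpow_neg (by norm_num : (0 : ℝ) ≤ 2) β, inv_inv] at this
  have pa : 0 ≤ (1 + a) ^ (-β) := by positivity
  have pb : 0 ≤ (1 + b) ^ (-β) := by positivity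
  have pc : 0 ≤ 2 ^ β * (1 + (a + b)) ^ (-β) := by positivity
  rcases le_total a b with h | h
  · have := key b hb (by linarith)
    nlinarith [mul_nonneg pc pb, mul_le_mul_of_nonneg_left this pa]
  · have := key a ha (by linarith)
    nlinarith [mul_nonneg pc pa, mul_le_mul_of_nonneg_right this pb]

lemma continuousOn_weight (β : ℝ) : ContinuousOn (fun y : ℝ => (1 + y) ^ (-β)) (Ici 0) :=
  ContinuousOn.rpow_const (by fun_prop) fun y hy => Or.inl (by
    have : (0 : ℝ) ≤ y := hy
    positivity)

lemma intervalIntegrable_weight (β : ℝ) {z : ℝ} (hz : 0 ≤ z) :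
    IntervalIntegrable (fun y : ℝ => (1 + y) ^ (-β)) volume 0 z :=
  ((continuousOn_weight β).mono (by
    rw [uIcc_of_le hz]; exact fun y hy => hy.1)).intervalIntegrable

lemma integral_weight_le {β : ℝ} (hβ : 1 < β) {z : ℝ} (hz : 0 ≤ z) :
    ∫ y in (0:ℝ)..z, (1 + y) ^ (-β) ≤ 1 / (β - 1) := by
  rw [intervalIntegral.integral_comp_add_left (fun y : ℝ => y ^ (-β)) 1,
    integral_rpow (Or.inr ⟨by linarith, by
      rw [uIcc_of_le (by linarith)]
      intro h
      linarith [h.1]⟩)]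
  have h1 : 0 ≤ (1 + z) ^ (-β + 1) := by positivity
  rw [show -β + 1 = -(β - 1) by ring] at h1 ⊢
  rw [add_zero, Real.one_rpow, div_neg, ← neg_div, neg_sub]
  have : 0 < β - 1 := by linarith
  gcongr
  linarith

lemma intervalIntegrable_conv {β₁ β₂ : ℝ} (hβ₁ : 0 < β₁) (hβ₂ : 1 < β₂) {f : ℝ → ℝ}
    (hf : memZ β₁ β₂ f) {z : ℝ} (hz : 0 ≤ z) :
    IntervalIntegrable (fun y => f (z - y) * f y) volume 0 z := by
  have hb : ∀ y, 0 ≤ y → |f y| ≤ normZ β₁ β₂ f * (Real.exp β₁ * 2 ^ β₂) := by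
    intro y hy
    have hN := normZ_nonneg β₁ β₂ f
    refine (abs_le_weight hβ₁ hβ₂ hf hy).trans (mul_le_of_le_one_right (by positivity) ?_)
    refine mul_le_one₀ (Real.exp_le_one_iff.2 ?_) (by positivity)
      (Real.rpow_le_one_of_one_le_of_nonpos (by linarith) (by linarith))
    nlinarith
  rw [intervalIntegrable_iff_integrableOn_Ioc_of_le hz]
  have hm : Measurable (fun y => f (z - y) * f y) :=
    (hf.1.comp (measurable_const.sub measurable_id)).mul hf.1
  refine Measure.integrableOn_of_bounded
    (M := (normZ β₁ β₂ f * (Real.exp β₁ * 2 ^ β₂)) * (normZ β₁ β₂ f * (Real.exp β₁ * 2 ^ β₂)))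
    (by simp) hm.aestronglyMeasurable ?_
  refine (ae_restrict_iff' measurableSet_Ioc).2 (ae_of_all _ fun y hy => ?_)
  rw [Real.norm_eq_abs, abs_mul]
  exact mul_le_mul (hb _ (by linarith [hy.2])) (hb _ hy.1.le) (abs_nonneg _)
    ((abs_nonneg _).trans (hb _ hy.1.le))

/-- the quadratic map Φ ↦ Φ * Φ is locally Lipschitz on Z. -/
theorem stmt3 (β₁ β₂ : ℝ) (hβ₁ : 0 < β₁) (hβ₂ : 1 < β₂) :
    ∃ C : ℝ, 0 < C ∧ ∀ Φ₁ Φ₂ : ℝ → ℝ, memZ β₁ β₂ Φ₁ → memZ β₁ β₂ Φ₂ →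
      normZ β₁ β₂ (fun z => conv Φ₂ Φ₂ z - conv Φ₁ Φ₁ z) ≤
        C * (normZ β₁ β₂ Φ₂ + normZ β₁ β₂ Φ₁) * normZ β₁ β₂ (fun z => Φ₂ z - Φ₁ z) := by
  have hβ : 0 < β₂ - 1 := by linarith
  set K : ℝ := Real.exp β₁ * 2 ^ β₂ with hK
  have hKpos : 0 < K := by positivity
  refine ⟨2 * (K ^ 2 * 2 ^ β₂ / (β₂ - 1)), by positivity, fun Φ₁ Φ₂ h₁ h₂ => ?_⟩
  have hd : memZ β₁ β₂ (fun z => Φ₂ z - Φ₁ z) := h₂.sub h₁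
  have hN₁ := normZ_nonneg β₁ β₂ Φ₁
  have hN₂ := normZ_nonneg β₁ β₂ Φ₂
  have hNd := normZ_nonneg β₁ β₂ (fun z => Φ₂ z - Φ₁ z)
  have b₁ := fun z hz => abs_le_weight hβ₁ hβ₂ h₁ (z := z) hz
  have b₂ := fun z hz => abs_le_weight hβ₁ hβ₂ h₂ (z := z) hz
  have bd := fun z hz => abs_le_weight hβ₁ hβ₂ hd (z := z) hz
  rw [← hK] at b₁ b₂ bd
  set N₁ := normZ β₁ β₂ Φ₁
  set N₂ := normZ β₁ β₂ Φ₂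
  set D := normZ β₁ β₂ (fun z => Φ₂ z - Φ₁ z)
  have main : normZ β₁ β₂ (fun z => conv Φ₂ Φ₂ z - conv Φ₁ Φ₁ z) ≤
      2 * ((N₂ + N₁) * D * (K ^ 2 * 2 ^ β₂ / (β₂ - 1))) := by
    refine normZ_le_of_weight hβ₁ hβ₂ (by positivity) fun z hz => ?_
    have hI := intervalIntegrable_weight β₂ hz
    have hI' : IntervalIntegrable (fun y : ℝ => (1 + (z - y)) ^ (-β₂)) volume 0 z := by
      have := (hI.comp_sub_left z).symm
      simpa using this
    set P : ℝ := (N₂ + N₁) * D * K ^ 2 * (Real.exp (-(β₁ * z)) * (2 ^ β₂ * (1 + z) ^ (-β₂)))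
      with hP
    have hP0 : 0 ≤ P := by positivity
    have hpt : ∀ y ∈ Ioc 0 z, ‖Φ₂ (z - y) * Φ₂ y - Φ₁ (z - y) * Φ₁ y‖ ≤
        P * ((1 + (z - y)) ^ (-β₂) + (1 + y) ^ (-β₂)) := by
      intro y hy
      have hy0 : 0 ≤ y := hy.1.le
      have hzy : 0 ≤ z - y := by linarith [hy.2]
      have hw := weight_mul_le (β := β₂) (by linarith) hzy hy0
      rw [sub_add_cancel] at hw
      have hexp : Real.exp (-(β₁ * (z - y))) * Real.exp (-(β₁ * y)) = Real.exp (-(β₁ * z)) := by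
        rw [← Real.exp_add]; ring_nf
      calc ‖Φ₂ (z - y) * Φ₂ y - Φ₁ (z - y) * Φ₁ y‖
          = |(Φ₂ (z - y) - Φ₁ (z - y)) * Φ₂ y + Φ₁ (z - y) * (Φ₂ y - Φ₁ y)| := by
            rw [Real.norm_eq_abs]; ring_nf
        _ ≤ |Φ₂ (z - y) - Φ₁ (z - y)| * |Φ₂ y| + |Φ₁ (z - y)| * |Φ₂ y - Φ₁ y| := by
            rw [← abs_mul, ← abs_mul]; exact abs_add_le _ _
        _ ≤ (D * K * (Real.exp (-(β₁ * (z - y))) * (1 + (z - y)) ^ (-β₂))) *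
              (N₂ * K * (Real.exp (-(β₁ * y)) * (1 + y) ^ (-β₂))) +
            (N₁ * K * (Real.exp (-(β₁ * (z - y))) * (1 + (z - y)) ^ (-β₂))) *
              (D * K * (Real.exp (-(β₁ * y)) * (1 + y) ^ (-β₂))) := by
            gcongr
            · exact bd _ hzy
            · exact b₂ _ hy0
            · exact b₁ _ hzy
            · exact bd _ hy0
        _ = (N₂ + N₁) * D * K ^ 2 * (Real.exp (-(β₁ * (z - y))) * Real.exp (-(β₁ * y))) *
              ((1 + (z - y)) ^ (-β₂) * (1 + y) ^ (-β₂)) := by ring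
        _ ≤ (N₂ + N₁) * D * K ^ 2 * Real.exp (-(β₁ * z)) *
              (2 ^ β₂ * (1 + z) ^ (-β₂) * ((1 + (z - y)) ^ (-β₂) + (1 + y) ^ (-β₂))) := by
            rw [hexp]; gcongr
        _ = P * ((1 + (z - y)) ^ (-β₂) + (1 + y) ^ (-β₂)) := by rw [hP]; ring
    have hint := intervalIntegral.norm_integral_le_of_norm_le hz
      (ae_of_all volume hpt) ((hI'.add hI).const_mul P)
    have hrefl : ∫ y in (0:ℝ)..z, (1 + (z - y)) ^ (-β₂) = ∫ y in (0:ℝ)..z, (1 + y) ^ (-β₂) := by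
      rw [intervalIntegral.integral_comp_sub_left (fun y : ℝ => (1 + y) ^ (-β₂)) z]
      simp
    rw [intervalIntegral.integral_const_mul, intervalIntegral.integral_add hI' hI, hrefl,
      intervalIntegral.integral_sub (intervalIntegrable_conv hβ₁ hβ₂ h₂ hz)
        (intervalIntegrable_conv hβ₁ hβ₂ h₁ hz), Real.norm_eq_abs] at hint
    have hW := integral_weight_le hβ₂ hz
    simp only [conv]
    rw [← mul_sub, abs_mul, abs_of_pos (by norm_num : (0 : ℝ) < 1 / 2)]
    have hfin := mul_le_mul_of_nonneg_left (add_le_add hW hW) hP0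
    calc _ ≤ (1 / 2 : ℝ) * (P * (1 / (β₂ - 1) + 1 / (β₂ - 1))) := by
          gcongr; exact hint.trans hfin
      _ = _ := by rw [hP]; field_simp; ring
  refine main.trans (le_of_eq ?_)
  ring
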